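/- Let γ = 1 and let u₀ : ℝ → ℝ be a continuously differentiable 1-periodic function. Set m = −inf_{x∈ℝ} u₀'(x) and M = sup_{x∈ℝ} |u₀(x)|. If m³ > 4M(4 + m), then the wave breaks before time 2/m: every periodic classical solution u of the Ostrovsky–Hunter equation on [0,T) with u(0,·) = u₀ and with u_x bounded from below on [0,T) × ℝ satisfies T ≤ 2/m. -/

import Mathlib

open MeasureTheory Filter Set intervalIntegral

/-- A periodic (period `1` in `x`) classical solution of the Ostrovsky–Hunter
equation `(u_t + u u_x)_x = γ u` on the set `S` of times (typically `[0,T)`):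
`u` is `1`-periodic in `x`, continuously differentiable in `t`, twice
continuously differentiable in `x`, with `u_tx` continuous, and the expanded
equation `u_tx + u_x² + u u_xx = γ u` holds pointwise at positive times of `S`. -/
structure IsPeriodicOHSolution (γ : ℝ) (S : Set ℝ) (u : ℝ → ℝ → ℝ) : Prop where
  periodic : ∀ t ∈ S, ∀ x : ℝ, u t (x + 1) = u t x
  diff_t : ∀ t ∈ S, ∀ x : ℝ, DifferentiableAt ℝ (fun s => u s x) t
  diff_x : ∀ t ∈ S, ∀ x : ℝ, DifferentiableAt ℝ (u t) x
  diff_xx : ∀ t ∈ S, ∀ x : ℝ, DifferentiableAt ℝ (deriv (u t)) x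
  diff_tx : ∀ t ∈ S, ∀ x : ℝ, DifferentiableAt ℝ (fun y => deriv (fun s => u s y) t) x
  cont_u : ContinuousOn (fun p : ℝ × ℝ => u p.1 p.2) (S ×ˢ (Set.univ : Set ℝ))
  cont_ut : ContinuousOn (fun p : ℝ × ℝ => deriv (fun s => u s p.2) p.1)
      (S ×ˢ (Set.univ : Set ℝ))
  cont_ux : ContinuousOn (fun p : ℝ × ℝ => deriv (u p.1) p.2) (S ×ˢ (Set.univ : Set ℝ))
  cont_uxx : ContinuousOn (fun p : ℝ × ℝ => deriv (deriv (u p.1)) p.2)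
      (S ×ˢ (Set.univ : Set ℝ))
  cont_utx : ContinuousOn (fun p : ℝ × ℝ => deriv (fun y => deriv (fun s => u s y) p.1) p.2)
      (S ×ˢ (Set.univ : Set ℝ))
  eqn : ∀ t ∈ S, 0 < t → ∀ x : ℝ,
    deriv (fun y => deriv (fun s => u s y) t) x
      + (deriv (u t) x) ^ 2 + u t x * deriv (deriv (u t)) x = γ * u t x

/-!
Along a characteristic `X' = u(t, X)` started at a minimum point of `u₀'`, the slope
`V = u_x(t, X)` solves the Riccati equation `V' = γ U - V²`, where `U = u(t, X)`. As long as
`γ U < m² / 2`, comparison with `-(1/m - t/2)⁻¹`, the solution of `B' = -B² / 2`, `B(0) = -m`,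
drives `V` to `-∞` no later than time `2/m`.

To control `U`, note that `U' = F(t, X)` for the material derivative `F = u_t + u u_x`, and that
the equation reads `F_x = γ u`. Periodicity of `F` gives `u` zero mean, so `F` has zero mean too and
`|F| ≤ ∫ |F_x| ≤ |γ| ‖u(t)‖₂`. Since `∂ₓ(F² - (2γ/3) u³) = 2γ u u_t`, the norm `‖u(t)‖₂` is
conserved, whence `|F| ≤ |γ| M` and `|U| ≤ M (1 + |γ| t)`.
-/

open Function
open scoped Topology NNReal

section Calculus

variable {E : Type*} [NormedAddCommGroup E] [NormedSpace ℝ E]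

lemma hasDerivAt_intervalIntegral_of_continuousOn {g g' : ℝ → ℝ → E} {U : Set ℝ} {a b t : ℝ}
    (hU : U ∈ 𝓝 t) (hg : ∀ s ∈ U, ∀ x ∈ uIcc a b, HasDerivAt (fun r => g r x) (g' s x) s)
    (hgc : ∀ s ∈ U, ContinuousOn (g s) (uIcc a b))
    (hg'c : ContinuousOn (uncurry g') (U ×ˢ uIcc a b)) :
    HasDerivAt (fun s => ∫ x in a..b, g s x) (∫ x in a..b, g' t x) t := by
  obtain ⟨K, hKt, hKU, hK⟩ := LocallyCompactSpace.local_compact_nhds t U hU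
  obtain ⟨C, hC⟩ := (hK.prod isCompact_uIcc).exists_bound_of_continuousOn
    (hg'c.mono (prod_mono_left hKU))
  have hg't : ContinuousOn (g' t) (uIcc a b) :=
    hg'c.uncurry_left t (mem_of_mem_nhds hU)
  refine (intervalIntegral.hasDerivAt_integral_of_dominated_loc_of_deriv_le (bound := fun _ => C)
    hKt ?_ ?_ ?_ ?_ ?_ ?_).2
  · filter_upwards [hU] with s hs
    exact ((hgc s hs).mono uIoc_subset_uIcc).aestronglyMeasurable measurableSet_uIoc
  · exact (hgc t (mem_of_mem_nhds hU)).intervalIntegrable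
  · exact (hg't.mono uIoc_subset_uIcc).aestronglyMeasurable measurableSet_uIoc
  · exact .of_forall fun x hx s hs => hC (s, x) ⟨hs, uIoc_subset_uIcc hx⟩
  · exact intervalIntegrable_const
  · exact .of_forall fun x hx s hs => hg s (hKU hs) x (uIoc_subset_uIcc hx)

lemma continuousOn_intervalIntegral_of_continuousOn {g : ℝ → ℝ → E} {U : Set ℝ} (a b : ℝ)
    (hg : ContinuousOn (uncurry g) (U ×ˢ univ)) :
    ContinuousOn (fun s => ∫ x in a..b, g s x) U := by
  rw [continuousOn_iff_continuous_domRestrict]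
  refine continuous_parametric_intervalIntegral_of_continuous' (f := fun s : U => g s) ?_ a b
  exact hg.comp_continuous (f := fun p : U × ℝ => ((p.1 : ℝ), p.2)) (by fun_prop)
    fun p => ⟨p.1.2, mem_univ _⟩

lemma hasDerivAt_comp_curve {G Gt Gx : ℝ → ℝ → E} {X : ℝ → ℝ} {t v : ℝ}
    (hGt : ∀ᶠ p in 𝓝 (t, X t), HasDerivAt (fun s => G s p.2) (Gt p.1 p.2) p.1)
    (hGx : ∀ᶠ p in 𝓝 (t, X t), HasDerivAt (G p.1) (Gx p.1 p.2) p.2)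
    (hGtc : ContinuousAt (uncurry Gt) (t, X t)) (hGxc : ContinuousAt (uncurry Gx) (t, X t))
    (hX : HasDerivAt X v t) :
    HasDerivAt (fun s => G s (X s)) (Gt t (X t) + v • Gx t (X t)) t := by
  have hspan := (ContinuousLinearMap.toSpanSingletonCLE (𝕜 := ℝ) (E := E)).continuous
  have hG := hasStrictFDerivAt_uncurry_coprod (𝕜 := ℝ) (u := (t, X t)) (f := G)
    (f₁ := fun s y => ContinuousLinearMap.toSpanSingleton ℝ (Gt s y))
    (f₂ := fun s y => ContinuousLinearMap.toSpanSingleton ℝ (Gx s y))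
    (hGt.mono fun _ hp => hp.hasFDerivAt) (hGx.mono fun _ hp => hp.hasFDerivAt)
    (hspan.continuousAt.comp hGtc) (hspan.continuousAt.comp hGxc)
  have hcurve : HasDerivAt (fun s => (s, X s)) (1, v) t := (hasDerivAt_id t).prodMk hX
  refine (hG.hasFDerivAt.comp_hasDerivAt t hcurve).congr_deriv ?_
  simp [HasUncurry.uncurry]

lemma hasDerivAt_mixed_partial_swap [CompleteSpace E] {g gt gx gtx : ℝ → ℝ → E}
    {U : Set ℝ} {t : ℝ}
    (hU : U ∈ 𝓝 t) (hgt : ∀ s ∈ U, ∀ x, HasDerivAt (fun r => g r x) (gt s x) s)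
    (hgx : ∀ s ∈ U, ∀ x, HasDerivAt (g s) (gx s x) x)
    (hgtx : ∀ s ∈ U, ∀ x, HasDerivAt (gt s) (gtx s x) x)
    (hgtc : ContinuousOn (uncurry gt) (U ×ˢ univ))
    (hgtxc : ContinuousOn (uncurry gtx) (U ×ˢ univ)) (x : ℝ) :
    HasDerivAt (fun s => gx s x) (gtx t x) t := by
  obtain ⟨ε, hε, hball⟩ := Metric.mem_nhds_iff.1 hU
  have huIcc : ∀ s ∈ Metric.ball t ε, uIcc t s ⊆ U := fun s hs =>
    ((convex_ball t ε).ordConnected.uIcc_subset (Metric.mem_ball_self hε) hs).trans hball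
  have hgt_cont : ∀ y, ContinuousOn (fun r => gt r y) U := fun y =>
    hgtc.uncurry_right y (mem_univ y)
  have hgtx_cont : ContinuousOn (fun r => gtx r x) U :=
    hgtxc.uncurry_right x (mem_univ x)
  have hgx_eq : ∀ s ∈ Metric.ball t ε, gx s x = gx t x + ∫ r in t..s, gtx r x := by
    intro s hs
    have hint : HasDerivAt (fun y => ∫ r in t..s, gt r y) (∫ r in t..s, gtx r x) x := by
      refine hasDerivAt_intervalIntegral_of_continuousOn (g' := fun y r => gtx r y) univ_mem
        (fun y _ r hr => hgtx r (huIcc s hs hr) y)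
        (fun y _ => (hgt_cont y).mono (huIcc s hs)) ?_
      exact hgtxc.comp continuous_swap.continuousOn fun p hp => ⟨huIcc s hs hp.2, mem_univ _⟩
    have hFTC : (fun y => ∫ r in t..s, gt r y) = fun y => g s y - g t y := funext fun y =>
      integral_eq_sub_of_hasDerivAt (fun r hr => hgt r (huIcc s hs hr) y)
        ((hgt_cont y).mono (huIcc s hs)).intervalIntegrable
    rw [hFTC] at hint
    rw [hint.unique ((hgx s (hball hs) x).sub (hgx t (mem_of_mem_nhds hU) x)),
      add_sub_cancel]
  refine HasDerivAt.congr_of_eventuallyEq ?_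
    (Filter.eventually_of_mem (Metric.ball_mem_nhds t hε) hgx_eq)
  refine (integral_hasDerivAt_right .refl ?_ (hgtx_cont.continuousAt hU)).const_add _
  exact (hgtx_cont.mono hball).stronglyMeasurableAtFilter Metric.isOpen_ball t
    (Metric.mem_ball_self hε)

lemma hasDerivWithinAt_Ici_of_continuousOn {f f' : ℝ → E} {a b t : ℝ}
    (hf : ContinuousOn f (Ico a b)) (hf' : ContinuousOn f' (Ico a b))
    (hderiv : ∀ t ∈ Ioo a b, HasDerivAt f (f' t) t) (ht : t ∈ Ico a b) :
    HasDerivWithinAt f (f' t) (Ici t) t := by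
  have hIoo : Ioo t b ⊆ Ioo a b := Ioo_subset_Ioo_left ht.1
  refine hasDerivWithinAt_Ici_of_tendsto_deriv
    (fun s hs => (hderiv s (hIoo hs)).differentiableAt.differentiableWithinAt)
    ((hf t ht).mono (hIoo.trans Ioo_subset_Ico_self)) (Ioo_mem_nhdsGT ht.2) ?_
  have hlim := ((hf' t ht).mono (hIoo.trans Ioo_subset_Ico_self)).tendsto
  rw [nhdsWithin_Ioo_eq_nhdsGT ht.2] at hlim
  refine hlim.congr' ?_
  filter_upwards [Ioo_mem_nhdsGT ht.2] with s hs using (hderiv s (hIoo hs)).deriv.symm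

lemma sq_intervalIntegral_le {f : ℝ → ℝ} {a b : ℝ} (hab : a ≤ b)
    (hf : IntervalIntegrable f volume a b)
    (hf2 : IntervalIntegrable (fun x => f x ^ 2) volume a b) :
    (∫ x in a..b, f x) ^ 2 ≤ (b - a) * ∫ x in a..b, f x ^ 2 := by
  rcases hab.eq_or_lt with rfl | hlt
  · simp
  set A := ∫ x in a..b, f x
  have hvar : ∫ x in a..b, ((b - a) * f x - A) ^ 2
      = (b - a) * ((b - a) * (∫ x in a..b, f x ^ 2) - A ^ 2) := by
    calc ∫ x in a..b, ((b - a) * f x - A) ^ 2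
        = ∫ x in a..b, ((b - a) ^ 2 * f x ^ 2 - 2 * (b - a) * A * f x + A ^ 2) := by
          congr 1 with x; ring
      _ = (b - a) ^ 2 * (∫ x in a..b, f x ^ 2) - 2 * (b - a) * A * A + (b - a) * A ^ 2 := by
          rw [intervalIntegral.integral_add ((hf2.const_mul _).sub (hf.const_mul _))
            intervalIntegrable_const, intervalIntegral.integral_sub (hf2.const_mul _)
            (hf.const_mul _), intervalIntegral.integral_const_mul,
            intervalIntegral.integral_const_mul, intervalIntegral.integral_const, smul_eq_mul]
      _ = _ := by ring
  have hnonneg : 0 ≤ (b - a) * ((b - a) * (∫ x in a..b, f x ^ 2) - A ^ 2) :=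
    hvar ▸ integral_nonneg hab fun x _ => sq_nonneg _
  exact sub_nonneg.1 (nonneg_of_mul_nonneg_right hnonneg (sub_pos.2 hlt))

end Calculus

section Periodic

lemma periodic_deriv {E : Type*} [NormedAddCommGroup E] [NormedSpace ℝ E] {f : ℝ → E} {c : ℝ}
    (hf : Periodic f c) : Periodic (deriv f) c := fun x => by
  rw [← deriv_comp_add_const, funext hf]

lemma exists_forall_norm_le_of_periodic {α E : Type*} [TopologicalSpace α]
    [NormedAddCommGroup E] {K : Set α} (hK : IsCompact K) {g : α → ℝ → E} {c : ℝ} (hc : 0 < c)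
    (hgc : ContinuousOn (uncurry g) (K ×ˢ univ)) (hper : ∀ a ∈ K, Periodic (g a) c) :
    ∃ C : ℝ≥0, ∀ a ∈ K, ∀ x, ‖g a x‖ ≤ C := by
  obtain ⟨C, hC⟩ := (hK.prod (isCompact_Icc (a := 0) (b := c))).exists_bound_of_continuousOn
    (hgc.mono (prod_mono_right (subset_univ _)))
  refine ⟨C.toNNReal, fun a ha x => ?_⟩
  obtain ⟨y, hy, hxy⟩ := (hper a ha).exists_mem_Ico₀ hc x
  rw [hxy]
  exact (hC (a, y) ⟨ha, Ico_subset_Icc_self hy⟩).trans (Real.le_coe_toNNReal C)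

lemma intervalIntegral_deriv_eq_zero_of_periodic {f f' : ℝ → ℝ} {c : ℝ} (hf : Periodic f c)
    (hderiv : ∀ x, HasDerivAt f (f' x) x) (hf' : Continuous f') : ∫ x in 0..c, f' x = 0 := by
  rw [integral_eq_sub_of_hasDerivAt (fun x _ => hderiv x) (hf'.intervalIntegrable _ _), hf.eq,
    sub_self]

lemma abs_le_intervalIntegral_abs_deriv_of_periodic {f f' : ℝ → ℝ} {c : ℝ} (hf : Periodic f c)
    (hc : 0 < c) (hderiv : ∀ x, HasDerivAt f (f' x) x) (hf' : Continuous f')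
    (hmean : ∫ x in 0..c, f x = 0) (x : ℝ) : |f x| ≤ ∫ y in 0..c, |f' y| := by
  have hfc : Continuous f := continuous_iff_continuousAt.2 fun y => (hderiv y).continuousAt
  have hf'per : Periodic (fun y => |f' y|) c := by
    have hf'eq : deriv f = f' := funext fun y => (hderiv y).deriv
    exact (hf'eq ▸ periodic_deriv hf : Periodic f' c).comp (|·|)
  obtain ⟨y, hy, hfy⟩ : ∃ y ∈ uIoo x (x + c), f y = 0 := by
    obtain ⟨y, hy, hfy⟩ := exists_eq_interval_average (f := f) (lt_add_of_pos_right x hc).ne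
      hfc.continuousOn
    refine ⟨y, hy, ?_⟩
    rw [hfy, interval_average_eq, hf.intervalIntegral_add_eq x 0, zero_add, hmean, smul_zero]
  rw [uIoo_of_le (by linarith)] at hy
  calc |f x| = |∫ z in x..y, f' z| := by
        rw [integral_eq_sub_of_hasDerivAt (fun z _ => hderiv z) (hf'.intervalIntegrable _ _), hfy,
          zero_sub, abs_neg]
    _ ≤ ∫ z in x..y, |f' z| := abs_integral_le_integral_abs hy.1.le
    _ ≤ ∫ z in x..(x + c), |f' z| :=
        integral_mono_interval le_rfl hy.1.le hy.2.le (.of_forall fun z => abs_nonneg _)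
          (hf'.abs.intervalIntegrable _ _)
    _ = ∫ z in 0..c, |f' z| := by rw [hf'per.intervalIntegral_add_eq x 0, zero_add]

lemma isCompact_range_deriv_of_periodic {f : ℝ → ℝ} {c : ℝ} (hf : Periodic f c) (hc : c ≠ 0)
    (hf1 : ContDiff ℝ 1 f) : IsCompact (range (deriv f)) :=
  (periodic_deriv hf).compact_of_continuous hc (hf1.continuous_deriv le_rfl)

lemma iInf_deriv_nonpos_of_periodic {f : ℝ → ℝ} {c : ℝ} (hf : Periodic f c) (hc : 0 < c)
    (hf1 : ContDiff ℝ 1 f) : ⨅ x, deriv f x ≤ 0 := by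
  obtain ⟨x, -, hx⟩ := exists_deriv_eq_zero hc hf1.continuous.continuousOn hf.eq.symm
  exact hx ▸ ciInf_le (isCompact_range_deriv_of_periodic hf hc.ne' hf1).bddBelow x

end Periodic

section Riccati

variable {m : ℝ} {f V : ℝ → ℝ}

lemma riccati_le (hm : 0 < m) (hVc : ContinuousOn V (Ico 0 (2 / m)))
    (hV : ∀ t ∈ Ico 0 (2 / m), HasDerivWithinAt V (f t - V t ^ 2) (Ici t) t)
    (hf : ∀ t ∈ Ico 0 (2 / m), f t < m ^ 2 / 2) (hV0 : V 0 ≤ -m) {t : ℝ}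
    (ht : t ∈ Ico 0 (2 / m)) : V t ≤ -(1 / m - t / 2)⁻¹ := by
  have hpos : ∀ s < 2 / m, 0 < 1 / m - s / 2 := fun s hs => by
    linarith [show 2 / m = 2 * (1 / m) by ring]
  have hB : ∀ s < 2 / m,
      HasDerivAt (fun r => -(1 / m - r / 2)⁻¹) (-((1 / m - s / 2)⁻¹ ^ 2 / 2)) s := fun s hs => by
    refine ((((hasDerivAt_id s).div_const 2).const_sub (1 / m)).inv
      (hpos s hs).ne').neg.congr_deriv ?_
    simp only [id, inv_pow]
    ring
  refine image_le_of_deriv_right_lt_deriv_boundary'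
    (hVc.mono (Icc_subset_Ico_right ht.2)) (fun s hs => hV s ⟨hs.1, hs.2.trans ht.2⟩)
    (by simpa using hV0) (fun s hs => (hB s (hs.2.trans_lt ht.2)).continuousAt.continuousWithinAt)
    (fun s hs => (hB s (hs.2.trans ht.2)).hasDerivWithinAt) ?_ (right_mem_Icc.2 ht.1)
  intro s hs hVs
  have hsm := hs.2.trans ht.2
  have hm_le : m ≤ (1 / m - s / 2)⁻¹ := by
    rw [le_inv_comm₀ hm (hpos s hsm), ← one_div]
    linarith [hs.1]
  have hsq : m ^ 2 ≤ (1 / m - s / 2)⁻¹ ^ 2 := by gcongr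
  rw [hVs, neg_sq]
  linarith [hf s ⟨hs.1, hsm⟩]

lemma not_continuousOn_of_riccati (hm : 0 < m)
    (hV : ∀ t ∈ Ico 0 (2 / m), HasDerivWithinAt V (f t - V t ^ 2) (Ici t) t)
    (hf : ∀ t ∈ Ico 0 (2 / m), f t < m ^ 2 / 2) (hV0 : V 0 ≤ -m) :
    ¬ ContinuousOn V (Icc 0 (2 / m)) := by
  intro hVc
  have hτ : 0 < 2 / m := by positivity
  have hgap : Tendsto (fun t => 1 / m - t / 2) (𝓝[<] (2 / m)) (𝓝[>] 0) := by
    refine tendsto_nhdsWithin_iff.2 ⟨?_, ?_⟩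
    · refine Tendsto.mono_left (Continuous.tendsto' (by fun_prop) _ _ ?_) nhdsWithin_le_nhds
      ring
    · filter_upwards [self_mem_nhdsWithin] with t ht
      rw [mem_Iio] at ht
      rw [mem_Ioi]
      linarith [show 2 / m = 2 * (1 / m) by ring]
  have hbot : Tendsto V (𝓝[<] (2 / m)) atBot := by
    refine tendsto_atBot_mono' _ ?_ (tendsto_neg_atTop_atBot.comp hgap.inv_tendsto_nhdsGT_zero)
    filter_upwards [Ico_mem_nhdsLT hτ] with t ht
    exact riccati_le hm (hVc.mono Ico_subset_Icc_self) hV hf hV0 ht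
  have hlim : Tendsto V (𝓝[<] (2 / m)) (𝓝 (V (2 / m))) := by
    have := ((hVc _ (right_mem_Icc.2 hτ.le)).mono Ico_subset_Icc_self).tendsto
    rwa [nhdsWithin_Ico_eq_nhdsLT hτ] at this
  exact not_tendsto_nhds_of_tendsto_atBot hbot _ hlim

end Riccati

/-- The material derivative `u_t + u u_x`: the rate of change of `u` along its own flow. -/
noncomputable def materialDeriv (u : ℝ → ℝ → ℝ) (t x : ℝ) : ℝ :=
  deriv (fun s => u s x) t + u t x * deriv (u t) x

namespace IsPeriodicOHSolution

variable {γ : ℝ} {S : Set ℝ} {u : ℝ → ℝ → ℝ} {t τ M : ℝ}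

lemma periodic_space (h : IsPeriodicOHSolution γ S u) (ht : t ∈ S) : Periodic (u t) 1 :=
  h.periodic t ht

lemma hasDerivAt_space (h : IsPeriodicOHSolution γ S u) (ht : t ∈ S) (x : ℝ) :
    HasDerivAt (u t) (deriv (u t) x) x :=
  (h.diff_x t ht x).hasDerivAt

lemma hasDerivAt_time (h : IsPeriodicOHSolution γ S u) (ht : t ∈ S) (x : ℝ) :
    HasDerivAt (fun s => u s x) (deriv (fun s => u s x) t) t :=
  (h.diff_t t ht x).hasDerivAt

lemma continuous_space (h : IsPeriodicOHSolution γ S u) (ht : t ∈ S) : Continuous (u t) :=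
  continuous_iff_continuousAt.2 fun x => (h.diff_x t ht x).continuousAt

lemma continuous_deriv_space (h : IsPeriodicOHSolution γ S u) (ht : t ∈ S) :
    Continuous (deriv (u t)) :=
  continuous_iff_continuousAt.2 fun x => (h.diff_xx t ht x).continuousAt

lemma continuous_deriv_time (h : IsPeriodicOHSolution γ S u) (ht : t ∈ S) :
    Continuous fun x => deriv (fun s => u s x) t :=
  continuous_iff_continuousAt.2 fun x => (h.diff_tx t ht x).continuousAt

lemma periodic_materialDeriv (h : IsPeriodicOHSolution γ S u) (hS : S ∈ 𝓝 t) :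
    Periodic (materialDeriv u t) 1 := fun x => by
  have hut : (fun s => u s (x + 1)) =ᶠ[𝓝 t] fun s => u s x :=
    Filter.eventually_of_mem hS fun s hs => h.periodic s hs x
  have hper := h.periodic_space (mem_of_mem_nhds hS)
  rw [materialDeriv, hut.deriv_eq, periodic_deriv hper, hper, materialDeriv]

lemma hasDerivAt_materialDeriv (h : IsPeriodicOHSolution γ S u) (ht : t ∈ S) (ht0 : 0 < t)
    (x : ℝ) : HasDerivAt (materialDeriv u t) (γ * u t x) x := by
  refine ((h.diff_tx t ht x).hasDerivAt.add
    ((h.hasDerivAt_space ht x).mul (h.diff_xx t ht x).hasDerivAt)).congr_deriv ?_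
  linarith [h.eqn t ht ht0 x]

lemma integral_eq_zero (h : IsPeriodicOHSolution γ S u) (hγ : γ ≠ 0) (hS : S ∈ 𝓝 t)
    (ht0 : 0 < t) : ∫ x in (0 : ℝ)..1, u t x = 0 := by
  have ht := mem_of_mem_nhds hS
  have hF := intervalIntegral_deriv_eq_zero_of_periodic (h.periodic_materialDeriv hS)
    (h.hasDerivAt_materialDeriv ht ht0) ((h.continuous_space ht).const_mul γ)
  rw [intervalIntegral.integral_const_mul] at hF
  exact (mul_eq_zero.1 hF).resolve_left hγ

lemma integral_deriv_time_eq_zero (h : IsPeriodicOHSolution γ S u) (hγ : γ ≠ 0) (hS : S ∈ 𝓝 t)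
    (ht0 : 0 < t) : ∫ x in (0 : ℝ)..1, deriv (fun s => u s x) t = 0 := by
  have hderiv : HasDerivAt (fun s => ∫ x in (0 : ℝ)..1, u s x)
      (∫ x in (0 : ℝ)..1, deriv (fun s => u s x) t) t :=
    hasDerivAt_intervalIntegral_of_continuousOn (g' := fun t x => deriv (fun s => u s x) t) hS
      (fun s hs x _ => h.hasDerivAt_time hs x) (fun s hs => (h.continuous_space hs).continuousOn)
      (h.cont_ut.mono (prod_mono_right (subset_univ _)))
  refine hderiv.unique ((hasDerivAt_const t 0).congr_of_eventuallyEq ?_)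
  filter_upwards [eventually_mem_nhds_iff.2 hS, eventually_gt_nhds ht0] with s hs hs0
  exact h.integral_eq_zero hγ hs hs0

lemma integral_materialDeriv_eq_zero (h : IsPeriodicOHSolution γ S u) (hγ : γ ≠ 0)
    (hS : S ∈ 𝓝 t) (ht0 : 0 < t) : ∫ x in (0 : ℝ)..1, materialDeriv u t x = 0 := by
  have ht := mem_of_mem_nhds hS
  have hflux_cont : Continuous fun x => u t x * deriv (u t) x :=
    (h.continuous_space ht).mul (h.continuous_deriv_space ht)
  have hflux : ∫ x in (0 : ℝ)..1, u t x * deriv (u t) x = 0 := by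
    refine intervalIntegral_deriv_eq_zero_of_periodic (f := fun x => u t x ^ 2 / 2)
      ((h.periodic_space ht).comp (· ^ 2 / 2)) (fun x => ?_) hflux_cont
    refine (((h.hasDerivAt_space ht x).pow 2).div_const 2).congr_deriv ?_
    ring
  simp only [materialDeriv]
  rw [intervalIntegral.integral_add ((h.continuous_deriv_time ht).intervalIntegrable _ _)
    (hflux_cont.intervalIntegrable _ _), h.integral_deriv_time_eq_zero hγ hS ht0, hflux, add_zero]

lemma integral_mul_deriv_time_eq_zero (h : IsPeriodicOHSolution γ S u) (hγ : γ ≠ 0)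
    (hS : S ∈ 𝓝 t) (ht0 : 0 < t) :
    ∫ x in (0 : ℝ)..1, 2 * u t x * deriv (fun s => u s x) t = 0 := by
  have ht := mem_of_mem_nhds hS
  have hint : ∫ x in (0 : ℝ)..1, γ * (2 * u t x * deriv (fun s => u s x) t) = 0 := by
    refine intervalIntegral_deriv_eq_zero_of_periodic
      (f := fun x => materialDeriv u t x ^ 2 - 2 * γ / 3 * u t x ^ 3) (fun x => ?_) (fun x => ?_)
      ((((h.continuous_space ht).const_mul 2).mul (h.continuous_deriv_time ht)).const_mul γ)
    · simp only [h.periodic_materialDeriv hS x, h.periodic_space ht x]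
    · refine (((h.hasDerivAt_materialDeriv ht ht0 x).pow 2).sub
        (((h.hasDerivAt_space ht x).pow 3).const_mul (2 * γ / 3))).congr_deriv ?_
      rw [materialDeriv]
      ring
  rw [intervalIntegral.integral_const_mul] at hint
  exact (mul_eq_zero.1 hint).resolve_left hγ

lemma hasDerivAt_integral_sq (h : IsPeriodicOHSolution γ S u) (hγ : γ ≠ 0) (hS : S ∈ 𝓝 t)
    (ht0 : 0 < t) : HasDerivAt (fun s => ∫ x in (0 : ℝ)..1, u s x ^ 2) 0 t := by
  refine (hasDerivAt_intervalIntegral_of_continuousOn (g := fun s x => u s x ^ 2)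
    (g' := fun t x => 2 * u t x * deriv (fun s => u s x) t) hS (fun s hs x _ => ?_)
    (fun s hs => ((h.continuous_space hs).pow 2).continuousOn) ?_).congr_deriv
    (h.integral_mul_deriv_time_eq_zero hγ hS ht0)
  · exact ((h.hasDerivAt_time hs x).pow 2).congr_deriv (by ring)
  · exact ((continuousOn_const.mul h.cont_u).mul h.cont_ut).mono
      (prod_mono_right (subset_univ _))

lemma integral_sq_eq (h : IsPeriodicOHSolution γ S u) (hγ : γ ≠ 0) (ht0 : 0 < t)
    (hS : Icc 0 t ⊆ S) : ∫ x in (0 : ℝ)..1, u t x ^ 2 = ∫ x in (0 : ℝ)..1, u 0 x ^ 2 := by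
  have hcont : ContinuousOn (fun s => ∫ x in (0 : ℝ)..1, u s x ^ 2) (Icc 0 t) :=
    (continuousOn_intervalIntegral_of_continuousOn (g := fun s x => u s x ^ 2) (U := S) 0 1
      ((continuous_pow 2).comp_continuousOn h.cont_u)).mono hS
  obtain ⟨s, -, hslope⟩ := exists_hasDerivAt_eq_slope _ (fun _ => 0) ht0 hcont fun s hs =>
    h.hasDerivAt_integral_sq hγ (mem_of_superset (Icc_mem_nhds hs.1 hs.2) hS) hs.1
  rw [eq_div_iff (sub_pos.2 ht0).ne', zero_mul] at hslope
  exact sub_eq_zero.1 hslope.symm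

lemma integral_abs_le (h : IsPeriodicOHSolution γ S u) (hγ : γ ≠ 0) (hM : ∀ x, |u 0 x| ≤ M)
    (ht0 : 0 < t) (hS : Icc 0 t ⊆ S) : ∫ x in (0 : ℝ)..1, |u t x| ≤ M := by
  have hM0 : 0 ≤ M := (abs_nonneg _).trans (hM 0)
  have hu := h.continuous_space (hS (right_mem_Icc.2 ht0.le))
  have hu0 := h.continuous_space (hS (left_mem_Icc.2 ht0.le))
  refine le_of_sq_le_sq ?_ hM0
  calc (∫ x in (0 : ℝ)..1, |u t x|) ^ 2
      ≤ (1 - 0) * ∫ x in (0 : ℝ)..1, |u t x| ^ 2 :=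
        sq_intervalIntegral_le zero_le_one (hu.abs.intervalIntegrable _ _)
          ((hu.abs.pow 2).intervalIntegrable _ _)
    _ = ∫ x in (0 : ℝ)..1, u 0 x ^ 2 := by
        simp only [sq_abs, sub_zero, one_mul, h.integral_sq_eq hγ ht0 hS]
    _ ≤ ∫ _ in (0 : ℝ)..1, M ^ 2 :=
        integral_mono_on zero_le_one ((hu0.pow 2).intervalIntegrable _ _)
          intervalIntegrable_const fun x _ => sq_le_sq' (abs_le.1 (hM x)).1 (abs_le.1 (hM x)).2
    _ = M ^ 2 := by simp

lemma abs_materialDeriv_le (h : IsPeriodicOHSolution γ S u) (hγ : γ ≠ 0)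
    (hM : ∀ x, |u 0 x| ≤ M) (hτ : Icc 0 τ ⊆ S) (ht : t ∈ Ioo 0 τ) (x : ℝ) :
    |materialDeriv u t x| ≤ |γ| * M := by
  have hS : S ∈ 𝓝 t := mem_of_superset (Icc_mem_nhds ht.1 ht.2) hτ
  have htS := mem_of_mem_nhds hS
  calc |materialDeriv u t x| ≤ ∫ y in (0 : ℝ)..1, |γ * u t y| :=
        abs_le_intervalIntegral_abs_deriv_of_periodic (h.periodic_materialDeriv hS) one_pos
          (h.hasDerivAt_materialDeriv htS ht.1) ((h.continuous_space htS).const_mul γ)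
          (h.integral_materialDeriv_eq_zero hγ hS ht.1) x
    _ = |γ| * ∫ y in (0 : ℝ)..1, |u t y| := by
        simp only [abs_mul, intervalIntegral.integral_const_mul]
    _ ≤ |γ| * M := by
        gcongr
        exact h.integral_abs_le hγ hM ht.1 ((Icc_subset_Icc_right ht.2.le).trans hτ)

lemma exists_characteristic (h : IsPeriodicOHSolution γ S u) (hτ0 : 0 ≤ τ) (hτ : Icc 0 τ ⊆ S)
    (x₀ : ℝ) : ∃ X : ℝ → ℝ, X 0 = x₀ ∧ IsIntegralCurveOn X u (Icc 0 τ) := by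
  obtain ⟨L, hL⟩ := exists_forall_norm_le_of_periodic isCompact_Icc one_pos
    (h.cont_u.mono (prod_mono_left hτ)) fun t ht => h.periodic_space (hτ ht)
  obtain ⟨K, hK⟩ := exists_forall_norm_le_of_periodic (g := fun t => deriv (u t)) isCompact_Icc
    one_pos (h.cont_ux.mono (prod_mono_left hτ))
    fun t ht => periodic_deriv (h.periodic_space (hτ ht))
  have hPL : IsPicardLindelof u ⟨0, left_mem_Icc.2 hτ0⟩ x₀ (L * τ.toNNReal) 0 L K :=
    { lipschitzOnWith := fun t ht =>
        (lipschitzWith_of_nnnorm_deriv_le (h.diff_x t (hτ ht)) (hK t ht)).lipschitzOnWith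
      continuousOn := fun x _ => (h.cont_u.uncurry_right x (mem_univ x)).mono hτ
      norm_le := fun t ht x _ => hL t ht x
      mul_max_le := by simp [hτ0] }
  exact hPL.exists_eq_forall_mem_Icc_hasDerivWithinAt₀

lemma hasDerivAt_deriv_space_time (h : IsPeriodicOHSolution γ S u) (hS : S ∈ 𝓝 t) (x : ℝ) :
    HasDerivAt (fun s => deriv (u s) x) (deriv (fun y => deriv (fun s => u s y) t) x) t :=
  hasDerivAt_mixed_partial_swap (gt := fun s y => deriv (fun r => u r y) s)
    (gtx := fun s => deriv fun y => deriv (fun r => u r y) s) hS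
    (fun _ hs => h.hasDerivAt_time hs) (fun _ hs => h.hasDerivAt_space hs)
    (fun s hs y => (h.diff_tx s hs y).hasDerivAt) h.cont_ut h.cont_utx x

section Characteristic

variable {X : ℝ → ℝ}

lemma hasDerivAt_comp_characteristic (h : IsPeriodicOHSolution γ S u) (hS : S ∈ 𝓝 t)
    (hX : HasDerivAt X (u t (X t)) t) :
    HasDerivAt (fun s => u s (X s)) (materialDeriv u t (X t)) t := by
  have hmem : S ×ˢ univ ∈ 𝓝 (t, X t) := prod_mem_nhds hS univ_mem
  exact hasDerivAt_comp_curve (Gt := fun s y => deriv (fun r => u r y) s)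
    (Gx := fun s => deriv (u s))
    (Filter.eventually_of_mem hmem fun p hp => h.hasDerivAt_time hp.1 p.2)
    (Filter.eventually_of_mem hmem fun p hp => h.hasDerivAt_space hp.1 p.2)
    (h.cont_ut.continuousAt hmem) (h.cont_ux.continuousAt hmem) hX

lemma hasDerivAt_deriv_comp_characteristic (h : IsPeriodicOHSolution γ S u) (hS : S ∈ 𝓝 t)
    (ht0 : 0 < t) (hX : HasDerivAt X (u t (X t)) t) :
    HasDerivAt (fun s => deriv (u s) (X s)) (γ * u t (X t) - deriv (u t) (X t) ^ 2) t := by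
  have hmem : S ×ˢ univ ∈ 𝓝 (t, X t) := prod_mem_nhds hS univ_mem
  refine (hasDerivAt_comp_curve (G := fun s => deriv (u s))
    (Gt := fun s => deriv fun y => deriv (fun r => u r y) s) (Gx := fun s => deriv (deriv (u s)))
    ?_ ?_ (h.cont_utx.continuousAt hmem) (h.cont_uxx.continuousAt hmem) hX).congr_deriv ?_
  · filter_upwards [prod_mem_nhds (eventually_mem_nhds_iff.2 hS) univ_mem] with p hp
    exact h.hasDerivAt_deriv_space_time hp.1 p.2
  · filter_upwards [hmem] with p hp using (h.diff_xx p.1 hp.1 p.2).hasDerivAt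
  · rw [smul_eq_mul]
    linarith [h.eqn t (mem_of_mem_nhds hS) ht0 (X t)]

lemma continuousOn_comp_characteristic (hτ : Icc 0 τ ⊆ S)
    (hX : IsIntegralCurveOn X u (Icc 0 τ)) {g : ℝ → ℝ → ℝ}
    (hg : ContinuousOn (uncurry g) (S ×ˢ univ)) :
    ContinuousOn (fun t => g t (X t)) (Icc 0 τ) :=
  hg.comp (continuousOn_id.prodMk hX.continuousOn) fun _ ht => ⟨hτ ht, mem_univ _⟩

lemma abs_comp_characteristic_le (h : IsPeriodicOHSolution γ S u) (hγ : γ ≠ 0)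
    (hM : ∀ x, |u 0 x| ≤ M) (hτ : Icc 0 τ ⊆ S) (hX : IsIntegralCurveOn X u (Icc 0 τ))
    (ht : t ∈ Icc 0 τ) : |u t (X t)| ≤ M * (1 + |γ| * t) := by
  rcases ht.1.eq_or_lt with rfl | ht0
  · simpa using hM (X 0)
  obtain ⟨s, hs, hslope⟩ := exists_hasDerivAt_eq_slope (fun s => u s (X s))
    (fun s => materialDeriv u s (X s)) ht0
    ((continuousOn_comp_characteristic hτ hX h.cont_u).mono (Icc_subset_Icc_right ht.2))
    fun s hs => by
      have hmem := Icc_mem_nhds hs.1 (hs.2.trans_le ht.2)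
      exact h.hasDerivAt_comp_characteristic (mem_of_superset hmem hτ)
        (hX.isIntegralCurveAt hmem).hasDerivAt
  rw [eq_div_iff (sub_pos.2 ht0).ne', sub_zero] at hslope
  calc |u t (X t)| = |u 0 (X 0) + materialDeriv u s (X s) * t| := by rw [hslope]; ring_nf
    _ ≤ |u 0 (X 0)| + |materialDeriv u s (X s)| * t :=
        (abs_add_le _ _).trans_eq (by rw [abs_mul, abs_of_pos ht0])
    _ ≤ M + |γ| * M * t := by
        gcongr
        · exact hM _
        · exact h.abs_materialDeriv_le hγ hM hτ ⟨hs.1, hs.2.trans_le ht.2⟩ _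
    _ = M * (1 + |γ| * t) := by ring

lemma forcing_lt (h : IsPeriodicOHSolution γ S u) (hM : ∀ x, |u 0 x| ≤ M) {m : ℝ} (hm : 0 < m)
    (hcond : 2 * |γ| * M * (m + 2 * |γ|) < m ^ 3) (hτ : Icc 0 (2 / m) ⊆ S)
    (hX : IsIntegralCurveOn X u (Icc 0 (2 / m))) (ht : t ∈ Icc 0 (2 / m)) :
    γ * u t (X t) < m ^ 2 / 2 := by
  rcases eq_or_ne γ 0 with rfl | hγ
  · simpa using pow_pos hm 2
  have hM0 : 0 ≤ M := (abs_nonneg _).trans (hM 0)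
  calc γ * u t (X t) ≤ |γ| * |u t (X t)| := (le_abs_self _).trans_eq (abs_mul _ _)
    _ ≤ |γ| * (M * (1 + |γ| * (2 / m))) := by
        gcongr
        exact (h.abs_comp_characteristic_le hγ hM hτ hX ht).trans (by gcongr; exact ht.2)
    _ = 2 * |γ| * M * (m + 2 * |γ|) / (2 * m) := by field_simp
    _ < m ^ 3 / (2 * m) := by gcongr
    _ = m ^ 2 / 2 := by field_simp

end Characteristic

theorem not_Icc_subset (h : IsPeriodicOHSolution γ S u) (hM : ∀ x, |u 0 x| ≤ M) {m x₀ : ℝ}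
    (hm : 0 < m) (hx₀ : deriv (u 0) x₀ ≤ -m)
    (hcond : 2 * |γ| * M * (m + 2 * |γ|) < m ^ 3) : ¬ Icc 0 (2 / m) ⊆ S := by
  intro hτ
  obtain ⟨X, hX0, hX⟩ := h.exists_characteristic (by positivity) hτ x₀
  have hU := continuousOn_comp_characteristic hτ hX h.cont_u
  have hV := continuousOn_comp_characteristic (g := fun t => deriv (u t)) hτ hX h.cont_ux
  refine not_continuousOn_of_riccati hm (fun t ht => ?_)
    (fun t ht => h.forcing_lt hM hm hcond hτ hX (Ico_subset_Icc_self ht)) (hX0 ▸ hx₀) hV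
  refine hasDerivWithinAt_Ici_of_continuousOn (f' := fun t => γ * u t (X t) - deriv (u t) (X t) ^ 2)
    (hV.mono Ico_subset_Icc_self)
    (((hU.const_smul γ).sub (hV.pow 2)).mono Ico_subset_Icc_self) (fun s hs => ?_) ht
  have hmem := Icc_mem_nhds hs.1 hs.2
  exact h.hasDerivAt_deriv_comp_characteristic (mem_of_superset hmem hτ) hs.1
    (hX.isIntegralCurveAt hmem).hasDerivAt

end IsPeriodicOHSolution

theorem hunter_wave_breaking_general {γ : ℝ}
    (u₀ : ℝ → ℝ) (hreg : ContDiff ℝ 1 u₀) (hper : ∀ x : ℝ, u₀ (x + 1) = u₀ x)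
    (m M : ℝ) (hm : m = -(⨅ x : ℝ, deriv u₀ x)) (hM : M = ⨆ x : ℝ, |u₀ x|)
    (hcond : m ^ 3 > 2 * |γ| * M * (m + 2 * |γ|))
    (T : ℝ) (u : ℝ → ℝ → ℝ) (h : IsPeriodicOHSolution γ (Set.Ico 0 T) u) (hu0 : u 0 = u₀) :
    T ≤ 2 / m := by
  subst hu0
  have hM_le : ∀ x, |u 0 x| ≤ M := fun x => by
    have hrange := (Periodic.comp hper (|·|)).compact_of_continuous one_ne_zero hreg.continuous.abs
    exact hM ▸ le_ciSup hrange.bddAbove x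
  have hM0 : 0 ≤ M := (abs_nonneg _).trans (hM_le 0)
  have hm0 : 0 ≤ m := hm ▸ neg_nonneg.2 (iInf_deriv_nonpos_of_periodic hper one_pos hreg)
  have hcube : 0 < m ^ 3 := hcond.trans_le' (by positivity)
  have hm_pos : 0 < m := (Odd.pow_pos_iff (by decide)).1 hcube
  obtain ⟨x₀, hx₀⟩ : ⨅ x, deriv (u 0) x ∈ range (deriv (u 0)) :=
    (isCompact_range_deriv_of_periodic hper one_ne_zero hreg).sInf_mem (range_nonempty _)
  by_contra! hT
  exact h.not_Icc_subset hM_le hm_pos (by rw [hx₀, hm, neg_neg]) hcond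
    (Icc_subset_Ico_right hT)

/-- Hunter's criterion: with `γ = 1`, if `m³ > 4M(4+m)`, where
`m = -inf u₀'` and `M = sup |u₀|`, then every periodic classical solution with
initial data `u₀` and `u_x` bounded from below on `[0,T) × ℝ` satisfies `T ≤ 2/m`. -/
theorem hunter_wave_breaking
    (u₀ : ℝ → ℝ) (hreg : ContDiff ℝ 1 u₀) (hper : ∀ x : ℝ, u₀ (x + 1) = u₀ x)
    (m M : ℝ) (hm : m = -(⨅ x : ℝ, deriv u₀ x)) (hM : M = ⨆ x : ℝ, |u₀ x|)
    (hcond : m ^ 3 > 4 * M * (4 + m)) :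
    ∀ (T : ℝ) (u : ℝ → ℝ → ℝ),
      IsPeriodicOHSolution 1 (Set.Ico 0 T) u →
      u 0 = u₀ →
      (∃ c : ℝ, ∀ t ∈ Set.Ico (0 : ℝ) T, ∀ x : ℝ, c ≤ deriv (u t) x) →
      T ≤ 2 / m := by
  have hM0 : 0 ≤ M := hM ▸ Real.iSup_nonneg fun _ => abs_nonneg _
  have hm0 : 0 ≤ m := hm ▸ neg_nonneg.2 (iInf_deriv_nonpos_of_periodic hper one_pos hreg)
  have hcond' : m ^ 3 > 2 * |1| * M * (m + 2 * |1|) := by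
    rw [abs_one]
    nlinarith [mul_nonneg hM0 hm0]
  exact fun T u h hu0 _ => hunter_wave_breaking_general u₀ hreg hper m M hm hM hcond' T u h hu0
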